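/- For every polynomial P ∈ ℂ[X], every positive integer m, and every positive integer ℓ, one has Ψ_χ(P(ℓN + X)^m) − Ψ_χ(P^m) = m · Σ_{n=1}^{ℓN} χ(n)·P'(n)·P(n)^{m−1}, where P(ℓN+X) denotes the polynomial obtained from P by substituting ℓN + X for X. -/

import Mathlib

/-- The linear form `Ψ_χ` applied to a complex polynomial `Q`, where `ψ m = Ψ_χ(X^m)`. -/
noncomputable def PsiPoly (ψ : ℕ → ℂ) (Q : Polynomial ℂ) : ℂ :=
  ∑ k ∈ Q.support, Q.coeff k * ψ k

/-!
For a linear form `Ψ` on `R[X]` put `G_Ψ(t) = Ψ(e^{tX}) = ∑ Ψ(X^m) t^m / m!`; the form is determined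
by `G_Ψ`. Translating the argument by `a` multiplies `G_Ψ` by `e^{at}`, differentiating it
multiplies `G_Ψ` by `t`, and evaluation at `a` has `G = e^{at}`. The identity defining `Ψ_χ` thus
says that `Q ↦ Ψ(Q(N + X)) - Ψ(Q)` and `Q ↦ ∑_{n ≤ N} χ(n) Q'(n)` have the same series. Multiplying
that identity by `1 + e^{Nt} + ⋯ + e^{(ℓ-1)Nt}` replaces `N` by `ℓN`, because `χ` is periodic; it
remains to take `Q = P^m`.
-/

section

open Polynomial PowerSeries Finset
open scoped Nat

theorem sum_Icc_one_add {M : Type*} [AddCommMonoid M] (f : ℕ → M) (a b : ℕ) :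
    ∑ n ∈ Icc 1 (a + b), f n = ∑ n ∈ Icc 1 a, f n + ∑ n ∈ Icc 1 b, f (n + a) := by
  simp only [← Ico_add_one_right_eq_Icc]
  rw [sum_Ico_add', ← sum_Ico_consecutive f (Nat.le_add_left 1 a) (by omega : a + 1 ≤ a + b + 1)]
  congr 3 <;> omega

theorem apply_add_mul_of_periodic {α : Type*} {c : ℕ → α} {N : ℕ}
    (hc : ∀ n, 1 ≤ n → c (n + N) = c n) (ℓ : ℕ) {n : ℕ} (hn : 1 ≤ n) : c (n + ℓ * N) = c n := by
  induction ℓ with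
  | zero => simp
  | succ ℓ ih => rw [add_one_mul, ← add_assoc, hc _ (by omega), ih]

theorem sum_Icc_mul_pow_of_periodic {A : Type*} [Semiring A] {c : ℕ → A} {N : ℕ}
    (hc : ∀ n, 1 ≤ n → c (n + N) = c n) (x : A) (ℓ : ℕ) :
    ∑ n ∈ Icc 1 (ℓ * N), c n * x ^ n =
      (∑ n ∈ Icc 1 N, c n * x ^ n) * ∑ j ∈ range ℓ, (x ^ N) ^ j := by
  induction ℓ with
  | zero => simp
  | succ ℓ ih =>
    rw [add_one_mul, sum_Icc_one_add, ih, sum_range_succ, mul_add,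
      sum_mul (Icc 1 N) _ ((x ^ N) ^ ℓ)]
    congr 1
    refine sum_congr rfl fun n hn => ?_
    rw [apply_add_mul_of_periodic hc ℓ (mem_Icc.mp hn).1, pow_add, mul_comm ℓ, pow_mul, mul_assoc]

variable {R : Type*} [CommRing R] [Algebra ℚ R]

/-- The exponential generating function `∑ Ψ(X^m) t^m / m!` of the moments of a linear form `Ψ` on
`R[X]`, as a linear map in `Ψ`. -/
noncomputable def momentEGF : (R[X] →ₗ[R] R) →ₗ[R] R⟦X⟧ where
  toFun Ψ := PowerSeries.mk fun m => algebraMap ℚ R (1 / m !) * Ψ (Polynomial.X ^ m)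
  map_add' Ψ Φ := by
    ext
    simp only [coeff_mk, LinearMap.add_apply, mul_add, map_add]
  map_smul' r Ψ := by
    ext
    simp only [coeff_mk, LinearMap.smul_apply, smul_eq_mul, mul_left_comm, RingHom.id_apply,
      PowerSeries.coeff_smul]

theorem coeff_momentEGF (Ψ : R[X] →ₗ[R] R) (m : ℕ) :
    PowerSeries.coeff m (momentEGF Ψ) = algebraMap ℚ R (1 / m !) * Ψ (Polynomial.X ^ m) := by
  simp only [momentEGF, LinearMap.coe_mk, AddHom.coe_mk, coeff_mk]

theorem momentEGF_injective : Function.Injective (momentEGF (R := R)) := by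
  intro Ψ Φ h
  refine Polynomial.lhom_ext' fun m => LinearMap.ext_ring ?_
  have hunit : IsUnit (algebraMap ℚ R (1 / m !)) :=
    (IsUnit.mk0 _ (one_div_ne_zero (mod_cast m.factorial_ne_zero))).map _
  have hcoeff := congrArg (PowerSeries.coeff m) h
  rw [coeff_momentEGF, coeff_momentEGF] at hcoeff
  simpa only [LinearMap.comp_apply, ← X_pow_eq_monomial] using hunit.mul_left_cancel hcoeff

theorem momentEGF_leval (a : R) : momentEGF (leval a) = rescale a (exp R) := by
  ext m
  rw [coeff_momentEGF, coeff_rescale, coeff_exp, leval_apply, eval_pow, eval_X, mul_comm]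

theorem momentEGF_comp_derivative (Ψ : R[X] →ₗ[R] R) :
    momentEGF (Ψ ∘ₗ derivative) = PowerSeries.X * momentEGF Ψ := by
  ext m
  cases m with
  | zero => simp [coeff_momentEGF]
  | succ m =>
    have hfactorial : (1 / (m + 1)! : ℚ) * (m + 1 : ℕ) = 1 / m ! := by
      rw [Nat.factorial_succ]
      push_cast
      field_simp
    rw [coeff_succ_X_mul, coeff_momentEGF, coeff_momentEGF, LinearMap.comp_apply,
      derivative_X_pow_succ, ← Nat.cast_succ, ← Polynomial.smul_eq_C_mul, map_smul, smul_eq_mul,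
      ← hfactorial, map_mul, map_natCast, mul_assoc]

theorem momentEGF_comp_taylor (a : R) (Ψ : R[X] →ₗ[R] R) :
    momentEGF (Ψ ∘ₗ taylor a) = rescale a (exp R) * momentEGF Ψ := by
  ext m
  rw [coeff_momentEGF, LinearMap.comp_apply, taylor_X_pow, add_comm, (Commute.all _ _).add_pow',
    map_sum, mul_sum, PowerSeries.coeff_mul]
  refine sum_congr rfl fun ⟨i, j⟩ hij => ?_
  obtain rfl : i + j = m := mem_antidiagonal.mp hij
  have hchoose : (1 / (i + j)! : ℚ) * (i + j).choose i = 1 / i ! * (1 / j !) := by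
    rw [Nat.cast_add_choose]
    field_simp
  rw [map_nsmul, nsmul_eq_mul, ← Polynomial.C_pow, ← Polynomial.smul_eq_C_mul, map_smul,
    smul_eq_mul, coeff_rescale, coeff_exp, coeff_momentEGF, ← mul_assoc,
    ← map_natCast (algebraMap ℚ R) ((i + j).choose i), ← map_mul, hchoose, map_mul]
  ring

theorem comp_taylor_sub_eq_sum_of_momentEGF {ι : Type*} (s : Finset ι) (w x : ι → R) (a : R)
    {Ψ : R[X] →ₗ[R] R}
    (hΨ : PowerSeries.X * ∑ i ∈ s, PowerSeries.C (w i) * rescale (x i) (exp R) =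
      (1 - rescale a (exp R)) * -momentEGF Ψ) :
    Ψ ∘ₗ taylor a - Ψ = ∑ i ∈ s, w i • (leval (x i) ∘ₗ derivative) := by
  apply momentEGF_injective
  calc momentEGF (Ψ ∘ₗ taylor a - Ψ) = (1 - rescale a (exp R)) * -momentEGF Ψ := by
        rw [map_sub, momentEGF_comp_taylor]
        ring
    _ = PowerSeries.X * ∑ i ∈ s, PowerSeries.C (w i) * rescale (x i) (exp R) := hΨ.symm
    _ = momentEGF (∑ i ∈ s, w i • (leval (x i) ∘ₗ derivative)) := by
        simp only [map_sum, map_smul, momentEGF_comp_derivative, momentEGF_leval, mul_sum,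
          PowerSeries.smul_eq_C_mul, mul_left_comm]

theorem X_mul_sum_rescale_exp_of_periodic {N : ℕ} {χ : ℕ → R}
    (hper : ∀ n, 1 ≤ n → χ (n + N) = χ n) {G : R⟦X⟧}
    (hG : PowerSeries.X * ∑ n ∈ Icc 1 N, PowerSeries.C (χ n) * rescale (n : R) (exp R) =
      (1 - rescale (N : R) (exp R)) * G) (ℓ : ℕ) :
    PowerSeries.X * ∑ n ∈ Icc 1 (ℓ * N), PowerSeries.C (χ n) * rescale (n : R) (exp R) =
      (1 - rescale ((ℓ * N : ℕ) : R) (exp R)) * G := by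
  simp only [← exp_pow_eq_rescale_exp] at hG ⊢
  have hC : ∀ n, 1 ≤ n → PowerSeries.C (χ (n + N)) = PowerSeries.C (χ n) := fun n hn => by
    rw [hper n hn]
  rw [sum_Icc_mul_pow_of_periodic hC, ← mul_assoc, hG, mul_comm ℓ, pow_mul,
    ← mul_neg_geom_sum (exp R ^ N) ℓ]
  ring

theorem apply_comp_C_add_X_sub_apply {N : ℕ} {χ : ℕ → R} (hper : ∀ n, 1 ≤ n → χ (n + N) = χ n)
    {Ψ : R[X] →ₗ[R] R}
    (hΨ : PowerSeries.X * ∑ n ∈ Icc 1 N, PowerSeries.C (χ n) * rescale (n : R) (exp R) =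
      (1 - rescale (N : R) (exp R)) * -momentEGF Ψ) (ℓ : ℕ) (Q : R[X]) :
    Ψ (Q.comp (Polynomial.C ((ℓ * N : ℕ) : R) + Polynomial.X)) - Ψ Q =
      ∑ n ∈ Icc 1 (ℓ * N), χ n * (derivative Q).eval (n : R) := by
  have hforms := comp_taylor_sub_eq_sum_of_momentEGF _ _ _ _
    (X_mul_sum_rescale_exp_of_periodic hper hΨ ℓ)
  simpa only [LinearMap.sub_apply, LinearMap.comp_apply, LinearMap.sum_apply, LinearMap.smul_apply,
    taylor_apply, leval_apply, smul_eq_mul, add_comm Polynomial.X] using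
    LinearMap.congr_fun hforms Q

theorem Psi_shift_of_power_general {N : ℕ} {χ : ℕ → R} (hper : ∀ n, 1 ≤ n → χ (n + N) = χ n)
    {Ψ : R[X] →ₗ[R] R}
    (hΨ : PowerSeries.X * ∑ n ∈ Icc 1 N, PowerSeries.C (χ n) * rescale (n : R) (exp R) =
      (1 - rescale (N : R) (exp R)) * -momentEGF Ψ) (P : R[X]) (m ℓ : ℕ) :
    Ψ (P.comp (Polynomial.C ((ℓ * N : ℕ) : R) + Polynomial.X) ^ m) - Ψ (P ^ m) =
      m * ∑ n ∈ Icc 1 (ℓ * N), χ n * (derivative P).eval (n : R) * P.eval (n : R) ^ (m - 1) := by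
  rw [← pow_comp, apply_comp_C_add_X_sub_apply hper hΨ, mul_sum]
  refine sum_congr rfl fun n _ => ?_
  rw [Polynomial.derivative_pow, eval_mul, eval_mul, eval_C, eval_pow]
  ring

/-- The linear form on `S[X]` with prescribed moments, sending `X ^ m` to `ψ m`; it makes the
coordinate formula `PsiPoly` available as a linear map. -/
noncomputable def momentForm {S : Type*} [CommSemiring S] (ψ : ℕ → S) : S[X] →ₗ[S] S :=
  Polynomial.lsum fun m => LinearMap.toSpanSingleton S S (ψ m)

theorem momentForm_X_pow {S : Type*} [CommSemiring S] (ψ : ℕ → S) (m : ℕ) :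
    momentForm ψ (Polynomial.X ^ m) = ψ m := by
  rw [momentForm, Polynomial.lsum_apply, X_pow_eq_monomial, sum_monomial_index 1 _ (by simp),
    LinearMap.toSpanSingleton_apply, one_smul]

theorem PsiPoly_eq_momentForm (ψ : ℕ → ℂ) : PsiPoly ψ = momentForm ψ := rfl

theorem momentEGF_momentForm {K : Type*} [Field K] [Algebra ℚ K] (ψ : ℕ → K) :
    momentEGF (momentForm ψ) = PowerSeries.mk fun m => ψ m / (m ! : K) := by
  ext m
  rw [coeff_momentEGF, momentForm_X_pow, PowerSeries.coeff_mk, map_div₀, map_one, map_natCast,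
    one_div_mul_eq_div]

end

/-- `Ψ_χ(P(ℓN+X)^m) - Ψ_χ(P^m) = m·Σ_{n=1}^{ℓN} χ(n)·P'(n)·P(n)^{m-1}` for every
polynomial `P` and positive integers `m`, `ℓ`. -/
theorem Psi_shift_of_power
    (N : ℕ) (hN : 1 ≤ N) (χ : ℕ → ℂ)
    (hper : ∀ n : ℕ, 1 ≤ n → χ (n + N) = χ n)
    (hsum : ∑ n ∈ Finset.Icc 1 N, χ n = 0)
    (ψ : ℕ → ℂ)
    (hψ : PowerSeries.X * (∑ n ∈ Finset.Icc 1 N,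
        PowerSeries.C (χ n) * PowerSeries.rescale (n : ℂ) (PowerSeries.exp ℂ)) =
      (1 - PowerSeries.rescale (N : ℂ) (PowerSeries.exp ℂ)) *
        (- PowerSeries.mk fun m => ψ m / (m.factorial : ℂ)))
    (P : Polynomial ℂ) (m : ℕ) (hm : 0 < m) (ℓ : ℕ) (hℓ : 0 < ℓ) :
    PsiPoly ψ ((P.comp (Polynomial.C ((ℓ * N : ℕ) : ℂ) + Polynomial.X)) ^ m) -
        PsiPoly ψ (P ^ m) =
      (m : ℂ) * ∑ n ∈ Finset.Icc 1 (ℓ * N),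
        χ n * (Polynomial.derivative P).eval ((n : ℕ) : ℂ) * (P.eval ((n : ℕ) : ℂ)) ^ (m - 1) := by
  rw [PsiPoly_eq_momentForm]
  exact Psi_shift_of_power_general hper (by rwa [momentEGF_momentForm]) P m ℓ
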